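/- Let p be a prime, F a field with char(F) = p, d an integer with d ≥ p, and V an F-linear subspace of M_d(F) that contains the scalar matrices F·1. If Tr(v^{p−1}) = 0 for all v ∈ V, then Tr(v^t) = 0 for all v ∈ V and all integers t with 1 ≤ t ≤ p − 1, and consequently the coefficient of X^{d−i} in the characteristic polynomial of v vanishes for every v ∈ V and every i with 1 ≤ i ≤ p − 1. -/

import Mathlib

open Polynomial in
theorem aux_jacobi {R : Type*} [CommRing R] {d : ℕ} (M : Matrix (Fin d) (Fin d) R[X]) :
    derivative M.det = Matrix.trace (M.adjugate * M.map derivative) := by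
  have h1 : ∀ i, (M.adjugate * M.map derivative) i i
      = (M.updateCol i (fun j => derivative (M j i))).det := by
    intro i
    rw [← Matrix.cramer_apply, Matrix.cramer_eq_adjugate_mulVec]
    rfl
  simp only [Matrix.trace, Matrix.diag_apply, h1]
  simp only [Matrix.det_apply, derivative_sum]
  rw [Finset.sum_comm]
  refine Finset.sum_congr rfl fun σ _ => ?_
  rw [derivative_smul, derivative_prod_finset, Finset.smul_sum]
  refine Finset.sum_congr rfl fun i _ => ?_
  congr 1
  rw [← Finset.prod_erase_mul _ _ (Finset.mem_univ i)]
  congr 1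
  · refine Finset.prod_congr rfl fun j hj => ?_
    rw [Matrix.updateCol_ne (Finset.ne_of_mem_erase hj)]
  · rw [Matrix.updateCol_self]

open Polynomial in
theorem aux_dvd {F : Type*} [Field F] {d : ℕ} (A : Matrix (Fin d) (Fin d) F) (m : ℕ)
    (h : ∀ t : ℕ, 1 ≤ t → t ≤ m → Matrix.trace (A ^ t) = 0) :
    (X : F[X]) ^ m ∣ derivative A.charpolyRev := by
  set B : Matrix (Fin d) (Fin d) F[X] := A.map C with hB
  have hBpow : ∀ t, B ^ t = (A ^ t).map C := by
    intro t
    have := map_pow (C : F →+* F[X]).mapMatrix A t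
    simpa [hB] using this.symm
  have hBtr : ∀ t, Matrix.trace (B ^ t) = C (Matrix.trace (A ^ t)) := by
    intro t
    rw [hBpow]; simp [Matrix.trace]
  set N : Matrix (Fin d) (Fin d) F[X] := 1 - (X : F[X]) • B with hN
  have hq : A.charpolyRev = N.det := rfl
  have hN' : N.map derivative = - B := by
    ext1 i j
    simp only [hN, hB, Matrix.map_apply, Matrix.sub_apply, Matrix.smul_apply, Matrix.neg_apply,
      Matrix.one_apply]
    split_ifs <;> simp
  have hgeom : N * ∑ k ∈ Finset.range m, ((X : F[X]) • B) ^ k = 1 - ((X : F[X]) • B) ^ m :=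
    mul_neg_geom_sum _ _
  have key : N.adjugate * (1 - ((X : F[X]) • B) ^ m) * B
      = N.det • ∑ k ∈ Finset.range m, (X : F[X]) ^ k • B ^ (k + 1) := by
    rw [← hgeom, ← mul_assoc, Matrix.adjugate_mul, Matrix.smul_mul, one_mul, Matrix.smul_mul,
      Finset.sum_mul]
    congr 1
    refine Finset.sum_congr rfl fun k _ => ?_
    rw [_root_.smul_pow, Matrix.smul_mul, pow_succ]
  have key2 := congrArg Matrix.trace key
  rw [Matrix.trace_smul, Matrix.trace_sum, Finset.sum_eq_zero, smul_zero, mul_sub, sub_mul,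
    Matrix.trace_sub, mul_one, _root_.smul_pow, Matrix.mul_smul, Matrix.smul_mul, Matrix.trace_smul,
    sub_eq_zero] at key2
  · rw [hq, aux_jacobi, hN', mul_neg, Matrix.trace_neg, key2, dvd_neg, smul_eq_mul]
    exact dvd_mul_right _ _
  · intro k hk
    rw [Matrix.trace_smul, hBtr, h _ (by omega) (by have := Finset.mem_range.1 hk; omega)]
    simp

open Polynomial in
theorem aux_trace (p : ℕ) (hp : p.Prime) (F : Type*) [Field F] (hchar : CharP F p)
    (d : ℕ) (V : Submodule F (Matrix (Fin d) (Fin d) F))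
    (hscalar : ∀ c : F, c • (1 : Matrix (Fin d) (Fin d) F) ∈ V)
    (hV : ∀ v ∈ V, Matrix.trace (v ^ (p - 1)) = 0) :
    ∀ v ∈ V, ∀ t : ℕ, t ≤ p - 1 → Matrix.trace (v ^ t) = 0 := by
  intro v hv t ht
  have hp2 := hp.two_le
  set P : F[X] := ∑ m ∈ Finset.range (p - 1 + 1),
    C (Matrix.trace (v ^ m) * ((p - 1).choose m : F)) * X ^ (p - 1 - m) with hP
  have heval : ∀ c : F, P.eval c = 0 := by
    intro c
    have h := hV _ (V.add_mem hv (hscalar c))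
    have hc : Commute v (c • (1 : Matrix (Fin d) (Fin d) F)) :=
      (Commute.one_right v).smul_right c
    rw [hc.add_pow, Matrix.trace_sum] at h
    rw [← h, hP, eval_finsetSum]
    refine Finset.sum_congr rfl fun m _ => ?_
    rw [_root_.smul_pow, one_pow, Matrix.mul_smul, mul_one, Matrix.smul_mul, Matrix.trace_smul,
      ← nsmul_eq_mul' (v ^ m), Matrix.trace_smul, nsmul_eq_mul]
    simp
    ring
  have hP0 : P = 0 := by
    refine eq_zero_of_natDegree_lt_card_of_eval_eq_zero P (f := fun i : Fin p => ((i : ℕ) : F))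
      ?_ (fun i => heval _) ?_
    · intro i j hij
      have := (CharP.natCast_eq_natCast F p).1 hij
      exact Fin.ext (Nat.ModEq.eq_of_lt_of_lt this i.2 j.2)
    · rw [Fintype.card_fin]
      refine lt_of_le_of_lt (natDegree_sum_le_of_forall_le (n := p - 1) _ _ fun m _ => ?_) (by omega)
      exact (natDegree_C_mul_X_pow_le _ _).trans (by omega)
  have hcoef : P.coeff (p - 1 - t) = Matrix.trace (v ^ t) * ((p - 1).choose t : F) := by
    rw [hP, finsetSum_coeff, Finset.sum_eq_single t]
    · rw [coeff_C_mul_X_pow, if_pos rfl]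
    · intro m hm hmt
      rw [coeff_C_mul_X_pow, if_neg]
      have := Finset.mem_range.1 hm
      omega
    · intro h
      exact absurd (Finset.mem_range.2 (by omega)) h
  rw [hP0, coeff_zero] at hcoef
  refine (mul_eq_zero.1 hcoef.symm).resolve_right ?_
  rw [CharP.cast_eq_zero_iff F p]
  intro hdvd
  have h1 : p ∣ (p - 1).factorial := by
    rw [← Nat.choose_mul_factorial_mul_factorial ht]
    exact (hdvd.mul_right _).mul_right _
  have := (hp.dvd_factorial).1 h1
  omega

theorem stmt_10 (p : ℕ) (hp : p.Prime) (F : Type*) [Field F] (hchar : CharP F p)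
    (d : ℕ) (hd : p ≤ d)
    (V : Submodule F (Matrix (Fin d) (Fin d) F))
    (hscalar : ∀ c : F, c • (1 : Matrix (Fin d) (Fin d) F) ∈ V)
    (hV : ∀ v ∈ V, Matrix.trace (v ^ (p - 1)) = 0) :
    (∀ v ∈ V, ∀ t : ℕ, 1 ≤ t → t ≤ p - 1 → Matrix.trace (v ^ t) = 0) ∧
      (∀ v ∈ V, ∀ i : ℕ, 1 ≤ i → i ≤ p - 1 →
        (Matrix.charpoly v).coeff (d - i) = 0) := by
  have htr := aux_trace p hp F hchar d V hscalar hV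
  refine ⟨fun v hv t _ ht => htr v hv t ht, fun v hv i hi1 hi2 => ?_⟩
  have hdvd := aux_dvd v (p - 1) (fun t _ ht => htr v hv t ht)
  have h0 := (Polynomial.X_pow_dvd_iff.1 hdvd) (i - 1) (by omega)
  rw [Polynomial.coeff_derivative, ← Matrix.reverse_charpoly, Polynomial.coeff_reverse,
    Matrix.charpoly_natDegree_eq_dim, Fintype.card_fin, Nat.sub_add_cancel hi1,
    Polynomial.revAt_le (by omega)] at h0
  refine (mul_eq_zero.1 h0).resolve_right ?_
  have h2 : ((i - 1 : ℕ) : F) + 1 = (i : F) := by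
    rw [← Nat.cast_succ, Nat.succ_eq_add_one, Nat.sub_add_cancel hi1]
  rw [h2, CharP.cast_eq_zero_iff F p]
  intro h
  have := Nat.le_of_dvd (by omega) h
  have := hp.two_le
  omega
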